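/- arXiv:1605.04473 — 4 statements merged into one kernel-verified Lean document; each statement's English description precedes it below -/
import Mathlib

section
/- Let F : ℝ → ℝ be convex, differentiable, and superlinear, let G : ℝ → ℝ be any function, let x ∈ ℝ, and let t > 0. Then the infimum over ξ ∈ ℝ of t·F*((x − ξ)/t) + G(ξ) equals the infimum over p ∈ ℝ of (p·F′(p) − F(p))·t + G(x − F′(p)·t), where F*(q) = sup_{r ∈ ℝ} (r·q − F(r)) is the Legendre transform of F. -/
lemma tangent_aux (F : ℝ → ℝ) (hconv : ConvexOn ℝ Set.univ F)
    (hdiff : Differentiable ℝ F) (p r : ℝ) : F p + deriv F p * (r - p) ≤ F r := by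
  rcases lt_trichotomy p r with h | h | h
  · have := hconv.deriv_le_slope (Set.mem_univ p) (Set.mem_univ r) h (hdiff p)
    rw [slope_def_field, le_div_iff₀ (by linarith)] at this
    linarith
  · subst h; simp
  · have := hconv.slope_le_deriv (Set.mem_univ r) (Set.mem_univ p) h (hdiff p)
    rw [slope_def_field, div_le_iff₀ (by linarith)] at this
    linarith

lemma surj_aux (F : ℝ → ℝ) (hdiff : Differentiable ℝ F)
    (hsuper : Filter.Tendsto (fun p => F p / |p|) (Filter.cocompact ℝ) Filter.atTop)
    (q : ℝ) : ∃ p, deriv F p = q := by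
  have habs : Filter.Tendsto (fun p : ℝ => |p|) (Filter.cocompact ℝ) Filter.atTop := by
    exact tendsto_norm_cocompact_atTop (E := ℝ)
  have hlim : Filter.Tendsto (fun p => F p - q * p) (Filter.cocompact ℝ) Filter.atTop := by
    refine Filter.tendsto_atTop_mono' _ ?_ habs
    filter_upwards [hsuper.eventually_ge_atTop (|q| + 1), habs.eventually_gt_atTop 0] with p h1 h2
    rw [le_div_iff₀ h2] at h1
    have := le_abs_self (q * p)
    rw [abs_mul] at this
    linarith
  obtain ⟨p, hp⟩ := (hdiff.continuous.sub (continuous_const.mul continuous_id)).exists_forall_le hlim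
  refine ⟨p, ?_⟩
  have hd : HasDerivAt (fun p => F p - q * p) (deriv F p - q * 1) p :=
    (hdiff p).hasDerivAt.sub ((hasDerivAt_id p).const_mul q)
  have hm : IsLocalMin (fun p => F p - q * p) p := Filter.Eventually.of_forall hp
  have := hm.hasDerivAt_eq_zero hd
  linarith

/-- For convex, differentiable, superlinear `F`, the Lax–Oleinik minimization over `ξ`
equals the minimization over `p` obtained via the substitution `ξ = x - F' p · t`. -/
theorem stmt_7 (F : ℝ → ℝ) (hconv : ConvexOn ℝ Set.univ F)
    (hdiff : Differentiable ℝ F)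
    (hsuper : Filter.Tendsto (fun p => F p / |p|) (Filter.cocompact ℝ) Filter.atTop)
    (Fstar : ℝ → ℝ)
    (hFstar : ∀ q : ℝ, Fstar q = sSup {y : ℝ | ∃ r : ℝ, y = r * q - F r})
    (G : ℝ → ℝ) (x t : ℝ) (ht : 0 < t) :
    sInf {y : ℝ | ∃ ξ : ℝ, y = t * Fstar ((x - ξ) / t) + G ξ} =
      sInf {y : ℝ | ∃ p : ℝ, y = (p * deriv F p - F p) * t + G (x - deriv F p * t)} := by
  have key : ∀ p, Fstar (deriv F p) = p * deriv F p - F p := by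
    intro p
    rw [hFstar]
    refine IsGreatest.csSup_eq ⟨⟨p, rfl⟩, ?_⟩
    rintro y ⟨r, rfl⟩
    have := tangent_aux F hconv hdiff p r
    linarith
  congr 1
  ext y
  constructor
  · rintro ⟨ξ, rfl⟩
    obtain ⟨p, hp⟩ := surj_aux F hdiff hsuper ((x - ξ) / t)
    refine ⟨p, ?_⟩
    have hx : x - deriv F p * t = ξ := by
      rw [hp, div_mul_cancel₀ _ ht.ne']; ring
    rw [hx, ← key, ← hp]; ring
  · rintro ⟨p, rfl⟩
    refine ⟨x - deriv F p * t, ?_⟩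
    have hx : (x - (x - deriv F p * t)) / t = deriv F p := by
      field_simp; ring
    rw [hx, key]; ring
end

section
/- Let F : ℝ → ℝ be twice differentiable with F″(p) ≥ γ for all p ∈ ℝ, for some constant γ > 0 (i.e., F is uniformly convex). Then F′ : ℝ → ℝ is a bijection, and the Legendre transform F*(q) = sup_{p ∈ ℝ} (p·q − F(p)) is differentiable with (F*)′ = (F′)^{-1}; that is, for every p ∈ ℝ, F* is differentiable at F′(p) with derivative p. -/
/-- For uniformly convex `F` (i.e. `F'' ≥ γ > 0`), the derivative `F'` is a bijection
of `ℝ` and the Legendre transform `F*` satisfies `(F*)' = (F')⁻¹`: for every `p`,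
`F*` is differentiable at `F' p` with derivative `p`. -/
theorem stmt_10 (F F' F'' : ℝ → ℝ) (γ : ℝ) (hγ : 0 < γ)
    (hF : ∀ p : ℝ, HasDerivAt F (F' p) p)
    (hF' : ∀ p : ℝ, HasDerivAt F' (F'' p) p)
    (hγle : ∀ p : ℝ, γ ≤ F'' p)
    (Fstar : ℝ → ℝ)
    (hFstar : ∀ q : ℝ, Fstar q = sSup {y : ℝ | ∃ p : ℝ, y = p * q - F p}) :
    Function.Bijective F' ∧ ∀ p : ℝ, HasDerivAt Fstar p (F' p) := by
  have key : ∀ a b : ℝ, a ≤ b → γ * (b - a) ≤ F' b - F' a := by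
    intro a b hab
    have hd : ∀ x, HasDerivAt (fun x => F' x - γ * x) (F'' x - γ * 1) x := fun x =>
      (hF' x).sub ((hasDerivAt_id x).const_mul γ)
    have hm : Monotone (fun x => F' x - γ * x) := by
      apply monotone_of_deriv_nonneg (fun x => (hd x).differentiableAt)
      intro x
      rw [(hd x).deriv]
      linarith [hγle x]
    have := hm hab
    simp only at this
    linarith
  have hmono : StrictMono F' := by
    intro a b hab
    nlinarith [key a b hab.le, mul_pos hγ (sub_pos.2 hab)]
  have hcont : Continuous F' := continuous_iff_continuousAt.2 fun x => (hF' x).continuousAt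
  have hsurj : Function.Surjective F' := by
    intro y
    have hc : γ * (|y - F' 0| / γ) = |y - F' 0| := by field_simp
    have hc0 : 0 ≤ |y - F' 0| / γ := by positivity
    set c := |y - F' 0| / γ
    have h1 := key 0 c hc0
    have h2 := key (-c) 0 (by linarith)
    have h3 := abs_le.1 (le_refl |y - F' 0|)
    exact mem_range_of_exists_le_of_exists_ge hcont ⟨-c, by linarith⟩ ⟨c, by linarith⟩
  have tangent : ∀ p r : ℝ, F p + F' p * (r - p) ≤ F r := by
    intro p r
    rcases lt_trichotomy p r with h | h | h
    · obtain ⟨c, hc, he⟩ := exists_hasDerivAt_eq_slope F F' h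
        (fun x _ => (hF x).continuousAt.continuousWithinAt) (fun x _ => hF x)
      rw [eq_div_iff (by linarith)] at he
      nlinarith [hmono hc.1]
    · subst h; simp
    · obtain ⟨c, hc, he⟩ := exists_hasDerivAt_eq_slope F F' h
        (fun x _ => (hF x).continuousAt.continuousWithinAt) (fun x _ => hF x)
      rw [eq_div_iff (by linarith)] at he
      nlinarith [hmono hc.2]
  have hval : ∀ p, Fstar (F' p) = p * F' p - F p := by
    intro p
    rw [hFstar]
    apply IsGreatest.csSup_eq
    refine ⟨⟨p, rfl⟩, ?_⟩
    rintro y ⟨r, rfl⟩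
    linarith [tangent p r]
  refine ⟨⟨hmono.injective, hsurj⟩, fun p => ?_⟩
  rw [hasDerivAt_iff_isLittleO]
  refine Asymptotics.IsBigO.trans_isLittleO ?_
    (Asymptotics.isLittleO_pow_sub_sub (F' p) (m := 2) (by norm_num))
  refine Asymptotics.IsBigO.of_bound (1 / γ) (Filter.Eventually.of_forall fun q => ?_)
  obtain ⟨r, rfl⟩ := hsurj q
  rw [hval, hval, smul_eq_mul, Real.norm_eq_abs, Real.norm_eq_abs]
  have e : |‖F' r - F' p‖ ^ 2| = (F' r - F' p) ^ 2 := by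
    rw [Real.norm_eq_abs, sq_abs, abs_of_nonneg (sq_nonneg _)]
  have t1 := tangent r p
  have t2 := tangent p r
  have hb : γ * ((F' r - F' p) * (r - p)) ≤ (F' r - F' p) ^ 2 := by
    rcases le_total p r with h | h
    · nlinarith [key p r h, hmono.monotone h]
    · nlinarith [key r p h, hmono.monotone h]
  have hb2 : (F' r - F' p) * (r - p) ≤ 1 / γ * (F' r - F' p) ^ 2 := by
    rw [one_div, ← div_eq_inv_mul, le_div_iff₀ hγ]
    linarith
  rw [abs_of_nonneg (by linarith)]
  first
  | rw [e]; linarith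
  | (rw [abs_of_nonneg (sq_nonneg _)]; linarith)
  | (rw [← Real.norm_eq_abs, e]; linarith)
end

section
/- Define u : ℝ × ℝ → ℝ by u(x,t) = −e^{−10x}/(1 + 9e^{−10t}). Then u(x,0) = −e^{−10x}/10 for all x ∈ ℝ, and u satisfies the space-dependent conservation law ∂_t u(x,t) + ∂_x [ (1 + e^{10x}·u(x,t))·u(x,t) ] = 0 for all (x,t) ∈ ℝ × ℝ, where ∂_x applies to the map y ↦ (1 + e^{10y}·u(y,t))·u(y,t). -/
/-- The function `u (x,t) = -e^{-10x}/(1 + 9 e^{-10t})` has initial value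
`-e^{-10x}/10` and solves `u_t + ((1 + u/a) u)_x = 0` with `a x = e^{-10x}`. -/
theorem stmt_12 (u : ℝ → ℝ → ℝ)
    (hu : ∀ x t : ℝ, u x t = -Real.exp (-10 * x) / (1 + 9 * Real.exp (-10 * t))) :
    (∀ x : ℝ, u x 0 = -Real.exp (-10 * x) / 10) ∧
    ∀ x t : ℝ,
      deriv (fun τ => u x τ) t +
        deriv (fun y => (1 + Real.exp (10 * y) * u y t) * u y t) x = 0 := by
  refine ⟨fun x => by rw [hu]; norm_num, fun x t => ?_⟩
  have hD : (1 + 9 * Real.exp (-10 * t)) ≠ 0 := by positivity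
  have hexp : ∀ s : ℝ, HasDerivAt (fun r : ℝ => Real.exp (-10 * r))
      (Real.exp (-10 * s) * (-10)) s := fun s => by
    simpa using ((hasDerivAt_id s).const_mul (-10 : ℝ)).exp
  have h1 : HasDerivAt (fun τ => u x τ)
      (-90 * Real.exp (-10 * x) * Real.exp (-10 * t) / (1 + 9 * Real.exp (-10 * t)) ^ 2) t := by
    have h := (hasDerivAt_const t (-Real.exp (-10 * x))).fun_div
      (((hexp t).const_mul 9).const_add 1) hD
    simp only [hu]
    refine h.congr_deriv ?_
    congr 1
    ring
  have hfun : (fun y => (1 + Real.exp (10 * y) * u y t) * u y t) =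
      fun y => (-(9 * Real.exp (-10 * t)) / (1 + 9 * Real.exp (-10 * t)) ^ 2) *
        Real.exp (-10 * y) := by
    funext y
    have hy : Real.exp (10 * y) * Real.exp (-10 * y) = 1 := by
      rw [← Real.exp_add]; simp
    have h2 : Real.exp (10 * y) * u y t = -1 / (1 + 9 * Real.exp (-10 * t)) := by
      rw [hu, ← mul_div_assoc, mul_neg, hy]
    rw [h2, hu]
    field_simp
    ring
  rw [h1.deriv, hfun, ((hexp x).const_mul _).deriv]
  ring
end

section
/- Fix x₀, C ∈ ℝ and t > 0, and define x, p : ℝ → ℝ by x(r) = (x₀ − C)e^{−r} + C·e^{r} and p(r) = (x₀ − C)e^{−r} − C·e^{r}. Then ∫₀ᵗ (x(r)² + p(r)²)/2 dr = (C²/2)(e^{2t} − 1) − ((x₀ − C)²/2)(e^{−2t} − 1), and, writing X := x(t), this quantity equals ((x₀² + X²)/2)·coth(t) − x₀·X·csch(t). -/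
/-- The running cost `∫₀ᵗ (x r ² + p r ²)/2 dr` along the Hamiltonian trajectories
`x r = (x₀ - C) e^{-r} + C e^r`, `p r = (x₀ - C) e^{-r} - C e^r` equals
`(C²/2)(e^{2t} - 1) - ((x₀ - C)²/2)(e^{-2t} - 1)`, which, with `X = x t`, equals
`((x₀² + X²)/2) coth t - x₀ X csch t`. -/
theorem stmt_14 (x₀ C t : ℝ) (ht : 0 < t) (x p : ℝ → ℝ)
    (hx : ∀ r : ℝ, x r = (x₀ - C) * Real.exp (-r) + C * Real.exp r)
    (hp : ∀ r : ℝ, p r = (x₀ - C) * Real.exp (-r) - C * Real.exp r) :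
    (∫ r in (0:ℝ)..t, ((x r) ^ 2 + (p r) ^ 2) / 2) =
      C ^ 2 / 2 * (Real.exp (2 * t) - 1) -
        (x₀ - C) ^ 2 / 2 * (Real.exp (-(2 * t)) - 1) ∧
    (∫ r in (0:ℝ)..t, ((x r) ^ 2 + (p r) ^ 2) / 2) =
      (x₀ ^ 2 + (x t) ^ 2) / 2 *
          ((Real.exp t + Real.exp (-t)) / (Real.exp t - Real.exp (-t))) -
        x₀ * x t * (2 / (Real.exp t - Real.exp (-t))) := by
  have h2 : Real.exp (2 * t) = Real.exp t ^ 2 := by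
    rw [sq, ← Real.exp_add]; ring_nf
  have h3 : Real.exp (-(2 * t)) = Real.exp (-t) ^ 2 := by
    rw [sq, ← Real.exp_add]; ring_nf
  have key : (∫ r in (0:ℝ)..t, ((x r) ^ 2 + (p r) ^ 2) / 2) =
      C ^ 2 / 2 * (Real.exp (2 * t) - 1) -
        (x₀ - C) ^ 2 / 2 * (Real.exp (-(2 * t)) - 1) := by
    have hd : ∀ r ∈ Set.uIcc 0 t, HasDerivAt
        (fun r : ℝ => C ^ 2 / 2 * Real.exp r ^ 2 - (x₀ - C) ^ 2 / 2 * Real.exp (-r) ^ 2)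
        (((x r) ^ 2 + (p r) ^ 2) / 2) r := by
      intro r _
      have e1 := ((Real.hasDerivAt_exp r).pow 2).const_mul (C ^ 2 / 2)
      have e2 := (((hasDerivAt_neg r).exp).pow 2).const_mul ((x₀ - C) ^ 2 / 2)
      refine (e1.sub e2).congr_deriv ?_
      rw [hx, hp]
      push_cast
      ring
    rw [intervalIntegral.integral_eq_sub_of_hasDerivAt hd, h2, h3]
    · simp only [neg_zero, Real.exp_zero]
      ring
    · apply Continuous.intervalIntegrable
      simp only [hx, hp]
      fun_prop
  refine ⟨key, ?_⟩
  rw [key, h2, h3, hx]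
  have hlt : Real.exp (-t) < Real.exp t := Real.exp_lt_exp.2 (by linarith)
  have hEF : Real.exp t * Real.exp (-t) = 1 := by
    rw [← Real.exp_add]; simp
  generalize Real.exp t = E at *
  generalize Real.exp (-t) = F at *
  have hne : E - F ≠ 0 := by linarith
  have hE : E ≠ 0 := left_ne_zero_of_mul_eq_one hEF
  obtain rfl : F = E⁻¹ := eq_inv_of_mul_eq_one_right hEF
  have hne' : E ^ 2 - 1 ≠ 0 := by
    intro h
    apply hne
    field_simp
    linarith
  field_simp
  ring
end
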